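/- For every m ≥ 1, writing m = 2^k + q with k ≥ 0 and 0 ≤ q < 2^k, the limit c(m) = lim_{n→∞} C(ω, n, m) exists and equals: 5/9 if m = 1; (3·2^{k+1} − 4q)/(3·2^k)² if m ≥ 2 and q < 2^{k−1}; and (5·2^k − 2q)/(3·2^k)² if m ≥ 2 and q ≥ 2^{k−1}. (This limit is the correlation integral c(μ, ε) of the unique invariant measure μ of the period-doubling subshift for any ε with 2^{−m} ≤ ε < 2^{−m+1}.) -/

import Mathlib

/-!
Since `pd (2 * n + 1) = 0` and `pd (2 * n) = 1 - pd n`, a window of length at least `3` determines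
the parity of its starting point: two windows starting at different parities could only agree if
two consecutive terms of the sequence were both `1`, and one of them has an odd index. Two windows
with the same parity agree exactly when the windows of half the length (rounded down or up
according to the parity) around the halved positions agree. Writing `pairCount n m` for the number
of matching pairs, this gives
`pairCount (2 * n) m = pairCount n (m / 2) + pairCount n ((m + 1) / 2)` for `3 ≤ m`
(`pairCount_two_mul`), and, `pairCount` being monotone in `n`, the limit satisfies
`c m = (c (m / 2) + c ((m + 1) / 2)) / 4` (`corr_step`).

The initial values `c 1 = 5 / 9` and `c 2 = 1 / 3` come from the density `1 / 3` of the ones.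
The closed formula is piecewise linear in `m`, its pieces agree at the break points
`2 ^ k` and `2 ^ k + 2 ^ (k - 1)`, and it satisfies the recursion; `corr_closed` proves it by
induction on `k`, for the closed ranges of `q`.
-/

open Filter Topology

/-- The period-doubling sequence (1-based): `pd i = k_i mod 2` where `k_i` is the
largest `k` such that `2^k` divides `i`. -/
def pd (i : ℕ) : ℕ := padicValNat 2 i % 2

/-- The `m`-word `w_i^(m) = ω_i ω_{i+1} ⋯ ω_{i+m-1}` of the period-doubling sequence. -/
def wordAt (i m : ℕ) : List ℕ := (List.range m).map (fun h => pd (i + h))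

/-- An `m`-word is allowed if it occurs in the period-doubling sequence. -/
def Allowed (m : ℕ) (v : List ℕ) : Prop := ∃ i, 1 ≤ i ∧ wordAt i m = v

/-- The complexity function of the period-doubling sequence. -/
noncomputable def pdComplexity (m : ℕ) : ℕ := Set.ncard {v | Allowed m v}

/-- `HasFreq m v c`: the frequency of the `m`-word `v` in the period-doubling
sequence exists and equals `c`. -/
def HasFreq (m : ℕ) (v : List ℕ) (c : ℝ) : Prop :=
  Tendsto (fun n : ℕ => (((Finset.Icc 1 n).filter (fun i => wordAt i m = v)).card : ℝ) / n)
    atTop (𝓝 c)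

open Classical in
/-- The correlation sum `C(ω, n, m)` of the period-doubling sequence, for a distance
threshold `ε` with `2^{-m} ≤ ε < 2^{-m+1}`. -/
noncomputable def corrSum (n m : ℕ) : ℝ :=
  (((Finset.range n ×ˢ Finset.range n).filter
      (fun p : ℕ × ℕ => ∀ h ∈ Finset.Icc 1 m, pd (p.1 + h) = pd (p.2 + h))).card : ℝ) / (n : ℝ) ^ 2

/-- The period-doubling substitution `ζ(0) = 01`, `ζ(1) = 00`, extended to a morphism
on finite words. -/
def substWord (w : List ℕ) : List ℕ := (w.map (fun a => if a = 0 then [0, 1] else [0, 0])).flatten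

/-- The period-doubling substitution acting on one-sided infinite sequences
(0-based indexing). -/
def substSeq (x : ℕ → ℕ) : ℕ → ℕ := fun n =>
  if n % 2 = 0 then 0 else if x (n / 2) = 0 then 1 else 0

/-! ### The sequence -/

theorem pd_odd (n : ℕ) : pd (2 * n + 1) = 0 := by
  unfold pd
  rw [padicValNat.eq_zero_of_not_dvd (by omega)]

theorem pd_even (n : ℕ) (hn : 0 < n) : pd (2 * n) = 1 - pd n := by
  unfold pd
  rw [padicValNat.mul (by norm_num) hn.ne', padicValNat_self]
  omega

theorem pd_lt (n : ℕ) : pd n < 2 := Nat.mod_lt _ (by norm_num)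

theorem pd_even_inj (a b : ℕ) (ha : 0 < a) (hb : 0 < b) :
    pd (2 * a) = pd (2 * b) ↔ pd a = pd b := by
  have := pd_lt a
  have := pd_lt b
  rw [pd_even a ha, pd_even b hb]
  omega

/-! ### Matching windows -/

/-- The windows of length `m` starting just after positions `i` and `j` agree. -/
def Match (m i j : ℕ) : Prop := ∀ h ∈ Finset.Icc 1 m, pd (i + h) = pd (j + h)

theorem match_symm (m i j : ℕ) : Match m i j ↔ Match m j i :=
  ⟨fun H h hh => (H h hh).symm, fun H h hh => (H h hh).symm⟩

theorem match_even_even (m a b : ℕ) : Match m (2 * a) (2 * b) ↔ Match (m / 2) a b := by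
  constructor
  · intro H h hh
    rw [Finset.mem_Icc] at hh
    have := H (2 * h) (Finset.mem_Icc.2 (by omega))
    rwa [← mul_add, ← mul_add, pd_even_inj _ _ (by omega) (by omega)] at this
  · intro H h hh
    rw [Finset.mem_Icc] at hh
    obtain ⟨t, rfl | rfl⟩ := h.even_or_odd'
    · rw [← mul_add, ← mul_add, pd_even_inj _ _ (by omega) (by omega)]
      exact H t (Finset.mem_Icc.2 (by omega))
    · rw [← add_assoc, ← add_assoc, ← mul_add, ← mul_add, pd_odd, pd_odd]

theorem match_odd_odd (m a b : ℕ) :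
    Match m (2 * a + 1) (2 * b + 1) ↔ Match ((m + 1) / 2) a b := by
  constructor
  · intro H h hh
    rw [Finset.mem_Icc] at hh
    have := H (2 * h - 1) (Finset.mem_Icc.2 (by omega))
    rwa [show 2 * a + 1 + (2 * h - 1) = 2 * (a + h) by omega,
      show 2 * b + 1 + (2 * h - 1) = 2 * (b + h) by omega,
      pd_even_inj _ _ (by omega) (by omega)] at this
  · intro H h hh
    rw [Finset.mem_Icc] at hh
    obtain ⟨t, rfl | rfl⟩ := h.even_or_odd'
    · rw [show 2 * a + 1 + 2 * t = 2 * (a + t) + 1 by ring,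
        show 2 * b + 1 + 2 * t = 2 * (b + t) + 1 by ring, pd_odd, pd_odd]
    · rw [show 2 * a + 1 + (2 * t + 1) = 2 * (a + (t + 1)) by ring,
        show 2 * b + 1 + (2 * t + 1) = 2 * (b + (t + 1)) by ring,
        pd_even_inj _ _ (by omega) (by omega)]
      exact H (t + 1) (Finset.mem_Icc.2 (by omega))

/-- A match of opposite parities would force `pd (b + 1) = pd (b + 2) = 1`. -/
theorem not_match_even_odd (m a b : ℕ) (hm : 3 ≤ m) : ¬ Match m (2 * a) (2 * b + 1) := by
  intro H
  have h1 := H 1 (Finset.mem_Icc.2 (by omega))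
  have h3 := H 3 (Finset.mem_Icc.2 (by omega))
  rw [pd_odd, show 2 * b + 1 + 1 = 2 * (b + 1) by ring, pd_even _ (by omega)] at h1
  rw [show 2 * a + 3 = 2 * (a + 1) + 1 by ring, pd_odd, show 2 * b + 1 + 3 = 2 * (b + 2) by ring,
    pd_even _ (by omega)] at h3
  obtain ⟨t, rfl | rfl⟩ := b.even_or_odd'
  · rw [pd_odd] at h1
    omega
  · rw [show 2 * t + 1 + 2 = 2 * (t + 1) + 1 by ring, pd_odd] at h3
    omega

theorem match_two_even_odd (a b : ℕ) :
    Match 2 (2 * a) (2 * b + 1) ↔ pd (a + 1) = 1 ∧ pd (b + 1) = 1 := by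
  have h : Match 2 (2 * a) (2 * b + 1) ↔
      pd (2 * a + 1) = pd (2 * b + 1 + 1) ∧ pd (2 * a + 2) = pd (2 * b + 1 + 2) := by
    constructor
    · intro H
      exact ⟨H 1 (by simp), H 2 (by simp)⟩
    · rintro ⟨h1, h2⟩ h hh
      rw [Finset.mem_Icc] at hh
      obtain rfl | rfl : h = 1 ∨ h = 2 := by omega
      · exact h1
      · exact h2
  rw [h, pd_odd, show 2 * b + 1 + 1 = 2 * (b + 1) by ring,
    show 2 * b + 1 + 2 = 2 * (b + 1) + 1 by ring, pd_odd, show 2 * a + 2 = 2 * (a + 1) by ring,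
    pd_even _ (by omega), pd_even _ (by omega)]
  have := pd_lt (a + 1)
  have := pd_lt (b + 1)
  omega

/-! ### Counting matching pairs -/

open Classical in
/-- The number of pairs of positions below `n` whose windows of length `m` agree. -/
noncomputable def pairCount (n m : ℕ) : ℕ :=
  ∑ i ∈ Finset.range n, ∑ j ∈ Finset.range n, if Match m i j then 1 else 0

/-- The number of ones among the first `n` terms of the sequence. -/
def oneCount (n : ℕ) : ℕ := ∑ i ∈ Finset.range n, if pd (i + 1) = 1 then 1 else 0

theorem corrSum_eq (n m : ℕ) : corrSum n m = (pairCount n m : ℝ) / (n : ℝ) ^ 2 := by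
  classical
  unfold corrSum pairCount
  rw [← Finset.sum_product', Finset.card_filter]
  congr 2

theorem sum_range_two_mul (f : ℕ → ℕ) (n : ℕ) :
    ∑ i ∈ Finset.range (2 * n), f i = ∑ i ∈ Finset.range n, (f (2 * i) + f (2 * i + 1)) := by
  induction n with
  | zero => simp
  | succ n ih =>
    rw [show 2 * (n + 1) = 2 * n + 1 + 1 by ring, Finset.sum_range_succ, Finset.sum_range_succ, ih,
      Finset.sum_range_succ]
    ring

theorem pairCount_mono (m : ℕ) : Monotone fun n => pairCount n m := by
  classical
  intro a b hab
  have hs := Finset.range_mono hab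
  exact (Finset.sum_le_sum fun i _ => Finset.sum_le_sum_of_subset hs).trans
    (Finset.sum_le_sum_of_subset hs)

theorem pairCount_two_mul (n m : ℕ) (hm : 3 ≤ m) :
    pairCount (2 * n) m = pairCount n (m / 2) + pairCount n ((m + 1) / 2) := by
  classical
  unfold pairCount
  simp only [sum_range_two_mul, match_even_even, match_odd_odd, not_match_even_odd m _ _ hm,
    match_symm m (2 * _ + 1) (2 * _), if_false, Finset.sum_add_distrib]
  simp

theorem pairCount_two_mul_two (n : ℕ) :
    pairCount (2 * n) 2 = 2 * pairCount n 1 + 2 * oneCount n ^ 2 := by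
  classical
  have h : oneCount n ^ 2 = ∑ i ∈ Finset.range n, ∑ j ∈ Finset.range n,
      if pd (i + 1) = 1 ∧ pd (j + 1) = 1 then 1 else 0 := by
    rw [sq, oneCount, Finset.sum_mul_sum]
    refine Finset.sum_congr rfl fun i _ => Finset.sum_congr rfl fun j _ => ?_
    split_ifs <;> simp_all
  rw [h]
  unfold pairCount
  simp only [sum_range_two_mul, match_even_even, match_odd_odd, match_two_even_odd,
    match_symm 2 (2 * _ + 1) (2 * _), Finset.sum_add_distrib]
  rw [Finset.sum_comm (f := fun i j => if pd (j + 1) = 1 ∧ pd (i + 1) = 1 then 1 else 0)]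
  norm_num
  ring

theorem pairCount_one (n : ℕ) :
    (pairCount n 1 : ℝ) = (oneCount n : ℝ) ^ 2 + ((n : ℝ) - oneCount n) ^ 2 := by
  classical
  let x : ℕ → ℝ := fun i => if pd (i + 1) = 1 then 1 else 0
  have hx : (oneCount n : ℝ) = ∑ i ∈ Finset.range n, x i := by
    simp [oneCount, x]
  have hy : (n : ℝ) - oneCount n = ∑ i ∈ Finset.range n, (1 - x i) := by
    rw [hx, Finset.sum_sub_distrib]; simp
  rw [hy, hx, sq, sq, Finset.sum_mul_sum, Finset.sum_mul_sum, ← Finset.sum_add_distrib]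
  unfold pairCount
  push_cast
  refine Finset.sum_congr rfl fun i _ => ?_
  rw [← Finset.sum_add_distrib]
  refine Finset.sum_congr rfl fun j _ => ?_
  have h : Match 1 i j ↔ pd (i + 1) = pd (j + 1) := by simp [Match]
  have h1 := pd_lt (i + 1)
  have h2 := pd_lt (j + 1)
  simp only [h, x]
  interval_cases pd (i + 1) <;> interval_cases pd (j + 1) <;> norm_num

/-! ### Density of the ones -/

theorem oneCount_two_mul (n : ℕ) : oneCount (2 * n) + oneCount n = n := by
  unfold oneCount
  rw [sum_range_two_mul, ← Finset.sum_add_distrib]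
  have : ∀ i ∈ Finset.range n, ((if pd (2 * i + 1) = 1 then 1 else 0) +
      (if pd (2 * i + 1 + 1) = 1 then 1 else 0) + if pd (i + 1) = 1 then 1 else 0) = 1 := by
    intro i _
    rw [pd_odd, show 2 * i + 1 + 1 = 2 * (i + 1) by ring, pd_even _ (by omega)]
    have h1 := pd_lt (i + 1)
    interval_cases pd (i + 1) <;> norm_num
  rw [Finset.sum_congr rfl this]
  simp

theorem oneCount_two_mul_add_one (n : ℕ) : oneCount (2 * n + 1) = oneCount (2 * n) := by
  conv_lhs => rw [oneCount, Finset.sum_range_succ, pd_odd]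
  simp [oneCount]

/-- The discrepancy `3 * oneCount n - n` changes sign, up to an error of `1`, when `n` doubles;
so it grows at most logarithmically, and a square-root bound is enough for the density. -/
theorem oneCount_discrepancy (n : ℕ) : (3 * (oneCount n : ℝ) - n) ^ 2 ≤ 4 * n := by
  induction n using Nat.strong_induction_on with
  | _ n ih =>
    rcases Nat.eq_zero_or_pos n with rfl | hn
    · simp [oneCount]
    obtain ⟨t, rfl | rfl⟩ := n.even_or_odd'
    · have h := ih t (by omega)
      have e : (oneCount (2 * t) : ℝ) + oneCount t = t := by exact_mod_cast oneCount_two_mul t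
      have e' : (oneCount (2 * t) : ℝ) = t - oneCount t := by linarith
      rw [e']
      push_cast
      have : (0 : ℝ) ≤ t := by positivity
      nlinarith
    · have h := ih t (by omega)
      have e : (oneCount (2 * t) : ℝ) + oneCount t = t := by exact_mod_cast oneCount_two_mul t
      have e' : (oneCount (2 * t) : ℝ) = t - oneCount t := by linarith
      rw [oneCount_two_mul_add_one, e']
      push_cast
      have : (0 : ℝ) ≤ t := by positivity
      nlinarith [sq_nonneg (3 * (oneCount t : ℝ) - t - 1)]

theorem oneCount_density : Tendsto (fun n : ℕ => (oneCount n : ℝ) / n) atTop (𝓝 (1 / 3)) := by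
  have h4 : Tendsto (fun n : ℕ => (4 : ℝ) / n) atTop (𝓝 0) :=
    tendsto_const_div_atTop_nhds_zero_nat 4
  have hsq : Tendsto (fun n : ℕ => ((3 * (oneCount n : ℝ) - n) / n) ^ 2) atTop (𝓝 0) := by
    refine squeeze_zero' (Eventually.of_forall fun n => sq_nonneg _) ?_ h4
    filter_upwards [eventually_gt_atTop 0] with n hn
    have hn' : (0 : ℝ) < n := by exact_mod_cast hn
    rw [div_pow, div_le_div_iff₀ (by positivity) hn']
    nlinarith [oneCount_discrepancy n]
  have habs : Tendsto (fun n : ℕ => (3 * (oneCount n : ℝ) - n) / n) atTop (𝓝 0) := by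
    have := hsq.sqrt
    simp only [Real.sqrt_sq_eq_abs, Real.sqrt_zero] at this
    exact (tendsto_zero_iff_abs_tendsto_zero _).2 this
  have := (habs.add_const 1).div_const 3
  rw [zero_add] at this
  refine this.congr' ?_
  filter_upwards [eventually_gt_atTop 0] with n hn
  have hn' : (0 : ℝ) < n := by exact_mod_cast hn
  field_simp
  ring

/-! ### Limits -/

/-- A monotone sequence has quadratic growth rate `c` as soon as its even terms do. -/
theorem tendsto_of_even (u : ℕ → ℕ) (hu : Monotone u) (c : ℝ)
    (h : Tendsto (fun n : ℕ => (u (2 * n) : ℝ) / (n : ℝ) ^ 2) atTop (𝓝 (4 * c))) :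
    Tendsto (fun n : ℕ => (u n : ℝ) / (n : ℝ) ^ 2) atTop (𝓝 c) := by
  have key : ∀ f : ℕ → ℕ, (∀ n, n ≤ 2 * f n + 1 ∧ 2 * f n ≤ n + 1) →
      Tendsto (fun n : ℕ => (u (2 * f n) : ℝ) / (n : ℝ) ^ 2) atTop (𝓝 c) := by
    intro f hf
    have hft : Tendsto f atTop atTop :=
      tendsto_atTop.2 fun b => by
        filter_upwards [eventually_ge_atTop (2 * b + 1)] with n hn
        have := hf n
        omega
    have hr : Tendsto (fun n : ℕ => (f n : ℝ) / n) atTop (𝓝 (1 / 2)) := by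
      have h1 : Tendsto (fun n : ℕ => (1 : ℝ) / n) atTop (𝓝 0) :=
        tendsto_const_div_atTop_nhds_zero_nat 1
      have hlo := (h1.const_sub 1).div_const 2
      have hhi := (h1.const_add 1).div_const 2
      rw [sub_zero] at hlo
      rw [add_zero] at hhi
      refine tendsto_of_tendsto_of_tendsto_of_le_of_le' hlo hhi ?_ ?_
      · filter_upwards [eventually_gt_atTop 0] with n hn
        have hn' : (0 : ℝ) < n := by exact_mod_cast hn
        have : (n : ℝ) ≤ 2 * f n + 1 := by exact_mod_cast (hf n).1
        rw [le_div_iff₀ hn']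
        field_simp
        linarith
      · filter_upwards [eventually_gt_atTop 0] with n hn
        have hn' : (0 : ℝ) < n := by exact_mod_cast hn
        have : 2 * (f n : ℝ) ≤ n + 1 := by exact_mod_cast (hf n).2
        rw [div_le_iff₀ hn']
        field_simp
        linarith
    have := (h.comp hft).mul (hr.pow 2)
    rw [show 4 * c * (1 / 2) ^ 2 = c by ring] at this
    refine this.congr' ?_
    filter_upwards [eventually_gt_atTop 1] with n hn
    have hn' : (n : ℝ) ≠ 0 := by exact_mod_cast (by omega : n ≠ 0)
    have hf' : (f n : ℝ) ≠ 0 := by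
      have := hf n
      exact_mod_cast (by omega : f n ≠ 0)
    simp only [Function.comp]
    field_simp
  refine tendsto_of_tendsto_of_tendsto_of_le_of_le (key (fun n => n / 2) fun n => by omega)
    (key (fun n => (n + 1) / 2) fun n => by omega) ?_ ?_
  · intro n
    have : u (2 * (n / 2)) ≤ u n := hu (by omega)
    dsimp only
    gcongr
  · intro n
    have : u n ≤ u (2 * ((n + 1) / 2)) := hu (by omega)
    dsimp only
    gcongr

/-- The correlation sums of window length `m` converge to `c`. -/
def HasCorr (m : ℕ) (c : ℝ) : Prop :=
  Tendsto (fun n : ℕ => (pairCount n m : ℝ) / (n : ℝ) ^ 2) atTop (𝓝 c)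

theorem corr_one : HasCorr 1 (5 / 9) := by
  have h := (oneCount_density.pow 2).add ((oneCount_density.const_sub 1).pow 2)
  rw [show ((1 : ℝ) / 3) ^ 2 + (1 - 1 / 3) ^ 2 = 5 / 9 by norm_num] at h
  refine h.congr' ?_
  filter_upwards [eventually_gt_atTop 0] with n hn
  have hn' : (n : ℝ) ≠ 0 := by exact_mod_cast hn.ne'
  rw [pairCount_one]
  field_simp

theorem corr_two : HasCorr 2 (1 / 3) := by
  refine tendsto_of_even _ (pairCount_mono 2) _ ?_
  have h := (corr_one.const_mul 2).add ((oneCount_density.pow 2).const_mul 2)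
  rw [show (2 : ℝ) * (5 / 9) + 2 * (1 / 3) ^ 2 = 4 * (1 / 3) by norm_num] at h
  refine h.congr fun n => ?_
  rw [pairCount_two_mul_two]
  push_cast
  ring

theorem corr_step (m : ℕ) (hm : 3 ≤ m) (a b : ℝ) (ha : HasCorr (m / 2) a)
    (hb : HasCorr ((m + 1) / 2) b) : HasCorr m ((a + b) / 4) := by
  refine tendsto_of_even _ (pairCount_mono m) _ ?_
  have h := Tendsto.add ha hb
  rw [show a + b = 4 * ((a + b) / 4) by ring] at h
  refine h.congr fun n => ?_
  rw [pairCount_two_mul n m hm]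
  push_cast
  ring

/-- The closed formula at `m = 2 ^ (j + 1) + q`, each linear piece on its closed range of `q`, so
that both neighbours `q / 2` and `(q + 1) / 2` lie in the same range at the previous level. -/
theorem corr_closed (j : ℕ) : ∀ q : ℕ,
    (q ≤ 2 ^ j → HasCorr (2 * 2 ^ j + q) ((12 * 2 ^ j - 4 * (q : ℝ)) / (6 * 2 ^ j) ^ 2)) ∧
    (2 ^ j ≤ q → q ≤ 2 * 2 ^ j →
      HasCorr (2 * 2 ^ j + q) ((10 * 2 ^ j - 2 * (q : ℝ)) / (6 * 2 ^ j) ^ 2)) := by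
  induction j with
  | zero =>
    have h3 : HasCorr 3 (2 / 9) := by
      have := corr_step 3 le_rfl _ _ corr_one corr_two
      norm_num at this
      exact this
    have h4 : HasCorr 4 (1 / 6) := by
      have := corr_step 4 (by norm_num) _ _ corr_two corr_two
      norm_num at this
      exact this
    have h2 := corr_two
    intro q
    constructor
    · intro hq
      have hq' : q ≤ 1 := by simpa using hq
      interval_cases q <;> norm_num <;> assumption
    · intro hq1 hq
      have hq' : q ≤ 2 := by simpa using hq
      have hq1' : 1 ≤ q := by simpa using hq1
      interval_cases q <;> norm_num <;> assumption
  | succ j ih =>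
    have hp : 1 ≤ 2 ^ j := Nat.one_le_two_pow
    have e : 2 ^ (j + 1) = 2 * 2 ^ j := by ring
    have eR : (2 : ℝ) ^ (j + 1) = 2 * 2 ^ j := by ring
    intro q
    rw [e, eR]
    have hpos : (0 : ℝ) < 2 ^ j := by positivity
    obtain ⟨r, rfl | rfl⟩ := q.even_or_odd'
    · have d1 : (2 * (2 * 2 ^ j) + 2 * r) / 2 = 2 * 2 ^ j + r := by omega
      have d2 : (2 * (2 * 2 ^ j) + 2 * r + 1) / 2 = 2 * 2 ^ j + r := by omega
      constructor
      · intro hq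
        have h := (ih r).1 (by omega)
        have := corr_step (2 * (2 * 2 ^ j) + 2 * r) (by omega) _ _ (d1 ▸ h) (d2 ▸ h)
        convert this using 1
        push_cast
        field_simp
        ring
      · intro hq1 hq2
        have h := (ih r).2 (by omega) (by omega)
        have := corr_step (2 * (2 * 2 ^ j) + 2 * r) (by omega) _ _ (d1 ▸ h) (d2 ▸ h)
        convert this using 1
        push_cast
        field_simp
        ring
    · have d1 : (2 * (2 * 2 ^ j) + (2 * r + 1)) / 2 = 2 * 2 ^ j + r := by omega
      have d2 : (2 * (2 * 2 ^ j) + (2 * r + 1) + 1) / 2 = 2 * 2 ^ j + (r + 1) := by omega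
      constructor
      · intro hq
        have h := (ih r).1 (by omega)
        have h' := (ih (r + 1)).1 (by omega)
        have := corr_step (2 * (2 * 2 ^ j) + (2 * r + 1)) (by omega) _ _ (d1 ▸ h) (d2 ▸ h')
        convert this using 1
        push_cast
        field_simp
        ring
      · intro hq1 hq2
        have h := (ih r).2 (by omega) (by omega)
        have h' := (ih (r + 1)).2 (by omega) (by omega)
        have := corr_step (2 * (2 * 2 ^ j) + (2 * r + 1)) (by omega) _ _ (d1 ▸ h) (d2 ▸ h')
        convert this using 1
        push_cast
        field_simp
        ring

theorem pd_correlation_integral (m k q : ℕ) (hm : 1 ≤ m) (hmk : m = 2 ^ k + q)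
    (hq : q < 2 ^ k) :
    (m = 1 → Tendsto (fun n => corrSum n m) atTop (𝓝 (5 / 9))) ∧
    (2 ≤ m → q < 2 ^ (k - 1) →
      Tendsto (fun n => corrSum n m) atTop
        (𝓝 ((3 * 2 ^ (k + 1) - 4 * (q : ℝ)) / (3 * 2 ^ k : ℝ) ^ 2))) ∧
    (2 ≤ m → 2 ^ (k - 1) ≤ q →
      Tendsto (fun n => corrSum n m) atTop
        (𝓝 ((5 * 2 ^ k - 2 * (q : ℝ)) / (3 * 2 ^ k : ℝ) ^ 2))) := by
  simp only [corrSum_eq]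
  refine ⟨?_, ?_⟩
  · rintro rfl
    exact corr_one
  · rcases k with _ | j
    -- for `k = 0` the hypotheses force `m = 1`
    · constructor <;> intro h2 <;> simp at hq hmk <;> omega
    have e : 2 ^ (j + 1) = 2 * 2 ^ j := by ring
    rw [e] at hmk hq
    subst hmk
    simp only [Nat.add_sub_cancel]
    constructor
    · intro _ h
      have := (corr_closed j q).1 h.le
      unfold HasCorr at this
      convert this using 2
      ring
    · intro _ h
      have := (corr_closed j q).2 h hq.le
      unfold HasCorr at this
      convert this using 2
      ring
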